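/- arXiv:2006.02042 — 2 statements merged into one kernel-verified Lean document; each statement's English description precedes it below -/
import Mathlib

section
/- The Laurent polynomial C₂ lies in the ideal of ℂ[t^{±1}, M^{±1}] generated by the four polynomials g₁ = −M¹⁴(M⁸ − 1)(t⁴ + M⁸t⁴ − M⁴(1 + t⁸)), g₂ = −M¹⁰(M⁸ − 1)t²(t⁴ + M⁸t⁴ − M⁴(1 + t⁸)), g₃ = (M⁴ − 1)(M − t)(M + t)(Mt − 1)(Mt + 1)(M² + t²)(1 + M²t²)(M⁴ + M⁶ + M⁸ + 2M¹⁰ + 3M¹² + M¹⁴ + 2M¹⁶ − t⁴), and g₄ = t²(t − M)(M + t)(Mt − 1)(Mt + 1)(M² + t²)(1 + M²t²)(−M⁴ − M⁶ − M⁸ + M¹⁴ + M¹⁶ + t⁴). -/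
/-!
Everything reduces to product-to-sum identities for the Laurent binomials
`t^a M^b ± t^(-a) M^(-b)`. Put `J = (M⁴ - M⁻⁴, a₁)`. Up to units, `g₁` is `a₁ a₋₁ (M⁴ - M⁻⁴)` and
`g₄` is `a₁ a₋₁ a₁` plus a multiple of `g₁`, so `(g₁, g₄)` contains `a₁ a₋₁ J`.

The automorphism `M ↦ t²M` sends `a₁` to `a₋₁`, so `a₁` factors out of `C₁`. Moreover
`a₀ = (M⁴ - M⁻⁴) - (M² - M⁻²) a₁ a₋₁`, and hence modulo `a₋₁ J` the cofactor of `a₁` is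
`(M⁴ - M⁻⁴)(t⁸M⁴ - t⁻⁸M⁻⁴) - a₁(t, t⁻²M) a₋₁ - a₁ a₋₁(t, t²M)`, which equals
`(M⁴ + M⁻⁴) a₋₁(t, t²M) a₋₁`. Finally `a₋₁(t, t²M)` lies in `J`, because `t⁴ = M⁴` and `M⁸ = 1`
force `t¹²M⁴ = M¹⁶ = 1`.
-/

noncomputable section

/-- The Laurent polynomial ring `ℂ[t^{±1}, M^{±1}]`, realized as the group algebra of `ℤ × ℤ`
over `ℂ`.  The element `mon a b` below is the monomial `t^a * M^b`. -/
abbrev R2 : Type := AddMonoidAlgebra ℂ (ℤ × ℤ)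

instance : IsDomain R2 := NoZeroDivisors.to_isDomain _

/-- The monomial `t^a * M^b` in `ℂ[t^{±1}, M^{±1}]`. -/
def mon (a b : ℤ) : R2 := AddMonoidAlgebra.single (a, b) (1 : ℂ)
/-- The exponent map corresponding to the substitution `(t, M) ↦ (t, t²M)`. -/
def eU : (ℤ × ℤ) ≃+ (ℤ × ℤ) where
  toFun p := (p.1 + 2 * p.2, p.2)
  invFun p := (p.1 - 2 * p.2, p.2)
  left_inv p := by ext <;> simp
  right_inv p := by ext <;> simp
  map_add' p q := by ext <;> simp <;> ring

/-- The exponent map corresponding to the substitution `(t, M) ↦ (t, t⁻²M)`. -/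
def eD : (ℤ × ℤ) ≃+ (ℤ × ℤ) where
  toFun p := (p.1 - 2 * p.2, p.2)
  invFun p := (p.1 + 2 * p.2, p.2)
  left_inv p := by ext <;> simp
  right_inv p := by ext <;> simp
  map_add' p q := by ext <;> simp <;> ring

/-- The exponent map corresponding to the substitution `(t, M) ↦ (t, M⁻¹)`. -/
def eI : (ℤ × ℤ) ≃+ (ℤ × ℤ) where
  toFun p := (p.1, -p.2)
  invFun p := (p.1, -p.2)
  left_inv p := by ext <;> simp
  right_inv p := by ext <;> simp
  map_add' p q := by ext <;> simp <;> ring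

/-- The substitution automorphism `F(t, M) ↦ F(t, t²M)` of `ℂ[t^{±1}, M^{±1}]`. -/
def sU : R2 ≃ₐ[ℂ] R2 := AddMonoidAlgebra.domCongr ℂ ℂ eU

/-- The substitution automorphism `F(t, M) ↦ F(t, t⁻²M)` of `ℂ[t^{±1}, M^{±1}]`. -/
def sD : R2 ≃ₐ[ℂ] R2 := AddMonoidAlgebra.domCongr ℂ ℂ eD

/-- The substitution automorphism `F(t, M) ↦ F(t, M⁻¹)` of `ℂ[t^{±1}, M^{±1}]`. -/
def sI : R2 ≃ₐ[ℂ] R2 := AddMonoidAlgebra.domCongr ℂ ℂ eI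
/-- `a₁(t,M) = t⁻²M² − t²M⁻²`. -/
def a1 : R2 := mon (-2) 2 - mon 2 (-2)

/-- `a₋₁(t,M) = t²M² − t⁻²M⁻²`. -/
def am1 : R2 := mon 2 2 - mon (-2) (-2)

/-- `a₀(t,M) = (M² − M⁻²)(−M⁴ − M⁻⁴ + M² + M⁻² + t⁴ + t⁻⁴)`. -/
def a0 : R2 :=
  (mon 0 2 - mon 0 (-2)) *
    (-(mon 0 4) - mon 0 (-4) + mon 0 2 + mon 0 (-2) + mon 4 0 + mon (-4) 0)

/-- `A₁(t,M) = −a₁(t,M)·a₁(t,t²M)·a₋₁(t,t⁻²M)`. -/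
def A1 : R2 := -(a1 * sU a1 * sD am1)

/-- `B₁(t,M) = a₀(t,M)·a₁(t,t²M)·a₋₁(t,t⁻²M)`. -/
def B1 : R2 := a0 * sU a1 * sD am1

/-- `C₁(t,M) = −a₁(t,M)·a₁(t,t⁻²M)·a₁(t,t²M) + a₀(t,M)·a₀(t,t²M)·a₋₁(t,t⁻²M)
    − a₁(t,M)·a₋₁(t,t⁻²M)·a₋₁(t,t²M)`. -/
def C1 : R2 := -(a1 * sD a1 * sU a1) + a0 * sU a0 * sD am1 - a1 * sD am1 * sU am1
/-- `g₁ = −M¹⁴(M⁸ − 1)(t⁴ + M⁸t⁴ − M⁴(1 + t⁸))`. -/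
def g1 : R2 := -(mon 0 14) * (mon 0 8 - 1) * (mon 4 0 + mon 4 8 - mon 0 4 * (1 + mon 8 0))

/-- `g₂ = −M¹⁰(M⁸ − 1)t²(t⁴ + M⁸t⁴ − M⁴(1 + t⁸))`. -/
def g2 : R2 :=
  -(mon 0 10) * (mon 0 8 - 1) * mon 2 0 * (mon 4 0 + mon 4 8 - mon 0 4 * (1 + mon 8 0))

/-- `g₃ = (M⁴ − 1)(M − t)(M + t)(Mt − 1)(Mt + 1)(M² + t²)(1 + M²t²)
(M⁴ + M⁶ + M⁸ + 2M¹⁰ + 3M¹² + M¹⁴ + 2M¹⁶ − t⁴)`. -/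
def g3 : R2 :=
  (mon 0 4 - 1) * (mon 0 1 - mon 1 0) * (mon 0 1 + mon 1 0) * (mon 1 1 - 1) * (mon 1 1 + 1) *
    (mon 0 2 + mon 2 0) * (1 + mon 2 2) *
    (mon 0 4 + mon 0 6 + mon 0 8 + 2 * mon 0 10 + 3 * mon 0 12 + mon 0 14 + 2 * mon 0 16
      - mon 4 0)

/-- `g₄ = t²(t − M)(M + t)(Mt − 1)(Mt + 1)(M² + t²)(1 + M²t²)
(−M⁴ − M⁶ − M⁸ + M¹⁴ + M¹⁶ + t⁴)`. -/
def g4 : R2 :=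
  mon 2 0 * (mon 1 0 - mon 0 1) * (mon 0 1 + mon 1 0) * (mon 1 1 - 1) * (mon 1 1 + 1) *
    (mon 0 2 + mon 2 0) * (1 + mon 2 2) *
    (-(mon 0 4) - mon 0 6 - mon 0 8 + mon 0 14 + mon 0 16 + mon 4 0)

/-- `C₂ = t⁸M¹⁰C₁`. -/
def C2 : R2 := mon 8 10 * C1

lemma mon_mul (a b c d : ℤ) : mon a b * mon c d = mon (a + c) (b + d) := by
  simp [mon, AddMonoidAlgebra.single_mul_single]

lemma mon_zero_zero : mon 0 0 = 1 := rfl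

lemma isUnit_mon (a b : ℤ) : IsUnit (mon a b) :=
  .of_mul_eq_one (mon (-a) (-b)) (by simp [mon_mul, mon_zero_zero])

lemma sU_mon (a b : ℤ) : sU (mon a b) = mon (a + 2 * b) b := by
  simp [sU, mon, eU]

lemma sD_mon (a b : ℤ) : sD (mon a b) = mon (a - 2 * b) b := by
  simp [sD, mon, eD]

/-- The Laurent binomial `t^a M^b - t^(-a) M^(-b)`, an analogue of `2 sinh`. -/
def monDiff (a b : ℤ) : R2 := mon a b - mon (-a) (-b)

/-- The Laurent binomial `t^a M^b + t^(-a) M^(-b)`, an analogue of `2 cosh`. -/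
def monSum (a b : ℤ) : R2 := mon a b + mon (-a) (-b)

lemma monDiff_neg (a b : ℤ) : monDiff (-a) (-b) = -monDiff a b := by
  simp [monDiff]

lemma monSum_neg (a b : ℤ) : monSum (-a) (-b) = monSum a b := by
  simp [monSum, add_comm]

lemma monDiff_mul_monDiff (a b c d : ℤ) :
    monDiff a b * monDiff c d = monSum (a + c) (b + d) - monSum (a - c) (b - d) := by
  simp only [monDiff, monSum, mul_sub, sub_mul, mon_mul]
  ring_nf

lemma monDiff_mul_monSum (a b c d : ℤ) :
    monDiff a b * monSum c d = monDiff (a + c) (b + d) + monDiff (a - c) (b - d) := by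
  simp only [monDiff, monSum, mul_add, sub_mul, mon_mul]
  ring_nf

lemma monSum_mul_monSum (a b c d : ℤ) :
    monSum a b * monSum c d = monSum (a + c) (b + d) + monSum (a - c) (b - d) := by
  simp only [monSum, mul_add, add_mul, mon_mul]
  ring_nf

lemma sU_monDiff (a b : ℤ) : sU (monDiff a b) = monDiff (a + 2 * b) b := by
  simp only [monDiff, map_sub, sU_mon]
  ring_nf

lemma sD_monDiff (a b : ℤ) : sD (monDiff a b) = monDiff (a - 2 * b) b := by
  simp only [monDiff, map_sub, sD_mon]
  ring_nf

lemma a1_eq_monDiff : a1 = monDiff (-2) 2 := rfl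

lemma am1_eq_monDiff : am1 = monDiff 2 2 := rfl

lemma sU_a1 : sU a1 = am1 := sU_monDiff (-2) 2

lemma sD_am1 : sD am1 = a1 := sD_monDiff 2 2

lemma sD_a1 : sD a1 = monDiff (-6) 2 := sD_monDiff (-2) 2

lemma sU_am1 : sU am1 = monDiff 6 2 := sU_monDiff 2 2

lemma a1_mul_am1 : a1 * am1 = monSum 0 4 - monSum 4 0 := by
  rw [a1_eq_monDiff, am1_eq_monDiff, monDiff_mul_monDiff, ← monSum_neg 4 0]
  norm_num

lemma a0_eq : a0 = monDiff 0 4 - monDiff 0 2 * (a1 * am1) := by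
  have hdouble : monDiff 0 4 = monDiff 0 2 * monSum 0 2 := by
    rw [monDiff_mul_monSum]
    simp [monDiff]
  rw [a1_mul_am1, hdouble]
  simp only [a0, monDiff, monSum, neg_zero]
  ring

lemma sU_a0_eq : sU a0 = monDiff 8 4 - monDiff 4 2 * (am1 * sU am1) := by
  simp [a0_eq, sU_monDiff, sU_a1]

lemma sU_am1_mem_span : sU am1 ∈ Ideal.span {monDiff 0 4, a1} := by
  have hmul_a1 : monDiff (-2) 2 * monSum 4 4 = monDiff 2 6 - monDiff 6 2 := by
    rw [monDiff_mul_monSum, sub_eq_add_neg (monDiff 2 6), ← monDiff_neg 6 2]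
    norm_num
  have hmul_monDiff : monDiff 0 4 * monSum 2 2 = monDiff 2 6 + monDiff (-2) 2 := by
    rw [monDiff_mul_monSum]
    norm_num
  refine Ideal.mem_span_pair.2 ⟨monSum 2 2, -(monSum 4 4 + 1), ?_⟩
  rw [sU_am1, a1_eq_monDiff]
  linear_combination hmul_monDiff - hmul_a1

lemma monDiff_mul_monDiff_sub_sub_eq :
    monDiff 0 4 * monDiff 8 4 - sD a1 * am1 - a1 * sU am1 = monSum 0 4 * sU am1 * am1 := by
  have hfactor : sU am1 * am1 = monSum 8 4 - monSum 4 0 := by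
    rw [sU_am1, am1_eq_monDiff, monDiff_mul_monDiff]
    norm_num
  rw [mul_assoc, hfactor, sD_a1, sU_am1, a1_eq_monDiff, am1_eq_monDiff, mul_sub]
  simp only [monDiff_mul_monDiff, monSum_mul_monSum]
  ring_nf

lemma C1_eq : C1 = a1 * am1 *
    ((monSum 0 4 - monDiff 0 4 * monDiff 4 2) * sU am1 - monDiff 0 2 * sU a0 * a1) := by
  rw [C1, sD_am1, sU_a1]
  linear_combination a1 * sU a0 * a0_eq + a1 * monDiff 0 4 * sU_a0_eq +
    a1 * monDiff_mul_monDiff_sub_sub_eq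

lemma mon_zero_eight_sub_one : mon 0 8 - 1 = mon 0 4 * monDiff 0 4 := by
  simp [monDiff, mul_sub, mon_mul, mon_zero_zero]

lemma mon_two_two_mul_a1 : mon 2 2 * a1 = mon 0 4 - mon 4 0 := by
  simp [a1, mul_sub, mon_mul]

lemma mon_two_two_mul_am1 : mon 2 2 * am1 = mon 4 4 - 1 := by
  simp [am1, mul_sub, mon_mul, mon_zero_zero]

lemma g1_eq : g1 = -mon 4 22 * (a1 * am1 * monDiff 0 4) := by
  have hfactor : mon 4 0 + mon 4 8 - mon 0 4 * (1 + mon 8 0) = mon 4 4 * (a1 * am1) := by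
    simp only [a1_mul_am1, monSum, mul_add, mul_sub, mul_one, mon_mul]
    ring_nf
  have hmon : mon 4 22 = mon 0 14 * mon 0 4 * mon 4 4 := by simp [mon_mul]
  rw [g1, mon_zero_eight_sub_one, hfactor, hmon]
  ring

lemma g4_eq : g4 = mon 8 6 * (a1 * am1 * a1) -
    (mon 6 14 + mon 6 16) * (a1 * am1 * monDiff 0 4) := by
  have ha1 : (mon 1 0 - mon 0 1) * (mon 0 1 + mon 1 0) * (mon 0 2 + mon 2 0) =
      -(mon 2 2 * a1) := by
    simp only [mon_two_two_mul_a1, mul_add, add_mul, sub_mul, mon_mul]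
    ring_nf
  have ham1 : (mon 1 1 - 1) * (mon 1 1 + 1) * (1 + mon 2 2) = mon 2 2 * am1 := by
    simp only [mon_two_two_mul_am1, mul_add, add_mul, sub_mul, mul_one, one_mul, mon_mul]
    norm_num
  have hlast : -(mon 0 4) - mon 0 6 - mon 0 8 + mon 0 14 + mon 0 16 + mon 4 0 =
      (mon 0 10 + mon 0 12) * monDiff 0 4 - mon 2 2 * a1 := by
    simp only [mon_two_two_mul_a1, monDiff, mul_sub, add_mul, mon_mul]
    ring_nf
  have hcoeff_a1 : mon 8 6 = mon 2 0 * mon 2 2 * mon 2 2 * mon 2 2 := by simp [mon_mul]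
  have hcoeff_monDiff :
      mon 6 14 + mon 6 16 = mon 2 0 * mon 2 2 * mon 2 2 * (mon 0 10 + mon 0 12) := by
    simp [mul_add, mon_mul]
  calc
    g4 = mon 2 0 * ((mon 1 0 - mon 0 1) * (mon 0 1 + mon 1 0) * (mon 0 2 + mon 2 0)) *
        ((mon 1 1 - 1) * (mon 1 1 + 1) * (1 + mon 2 2)) *
        (-(mon 0 4) - mon 0 6 - mon 0 8 + mon 0 14 + mon 0 16 + mon 4 0) := by
      rw [g4]
      ring
    _ = _ := by
      rw [ha1, ham1, hlast, hcoeff_a1, hcoeff_monDiff]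
      ring

lemma a1_mul_am1_mul_monDiff_mem_span : a1 * am1 * monDiff 0 4 ∈ Ideal.span {g1, g4} := by
  rw [← Ideal.unit_mul_mem_iff_mem _ (isUnit_mon 4 22).neg, ← g1_eq]
  exact Ideal.subset_span (by simp)

lemma a1_mul_am1_mul_a1_mem_span : a1 * am1 * a1 ∈ Ideal.span {g1, g4} := by
  rw [← Ideal.unit_mul_mem_iff_mem _ (isUnit_mon 8 6), eq_add_of_sub_eq g4_eq.symm]
  exact add_mem (Ideal.subset_span (by simp))
    (Ideal.mul_mem_left _ _ a1_mul_am1_mul_monDiff_mem_span)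

lemma a1_mul_am1_mul_mem_span {q : R2} (hq : q ∈ Ideal.span {monDiff 0 4, a1}) :
    a1 * am1 * q ∈ Ideal.span {g1, g4} := by
  obtain ⟨x, y, rfl⟩ := Ideal.mem_span_pair.1 hq
  rw [mul_add, mul_left_comm, mul_left_comm _ y]
  exact add_mem (Ideal.mul_mem_left _ x a1_mul_am1_mul_monDiff_mem_span)
    (Ideal.mul_mem_left _ y a1_mul_am1_mul_a1_mem_span)

theorem C2_mem_span_groebner_general : C2 ∈ Ideal.span {g1, g4} := by
  rw [C2, C1_eq]
  exact Ideal.mul_mem_left _ _ <| a1_mul_am1_mul_mem_span <| sub_mem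
    (Ideal.mul_mem_left _ _ sU_am1_mem_span) (Ideal.mul_mem_left _ _ (Ideal.subset_span (by simp)))

/-- The Laurent polynomial `C₂` lies in the ideal of `ℂ[t^{±1}, M^{±1}]` generated by the
Groebner basis elements `g₁, g₂, g₃, g₄`. -/
theorem C2_mem_span_groebner : C2 ∈ Ideal.span ({g1, g2, g3, g4} : Set R2) := by
  refine Ideal.span_mono ?_ C2_mem_span_groebner_general
  simp [Set.insert_subset_iff]
end
end

section
/- Suppose p₀, p₁ ∈ ℂ[t^{±1}, M^{±1}] satisfy A₁(t,M)·p₀ + B₁(t,M)·p₁ = C₁(t,M). Then p₁(1,M) = ã₁(M) if and only if p₀(1,M) = ã₀(M), where F(1,M) denotes the image of F under the substitution t ↦ 1. -/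
/-!
At `t = 1` both substitutions `M ↦ t^{±2}M` become trivial. With `x = M² − M⁻²` and
`c = −M⁴ − M⁻⁴ + M² + M⁻² + 2`, the hypothesis specializes to
`−x³ p₀(1,M) + x³ c p₁(1,M) = x³ (c² − 2)`, and cancelling `x³` in the domain `ℂ[M^{±1}]` gives
`p₀(1,M) = c p₁(1,M) − c² + 2`. Since `ã₁ = 2c` and `ã₀ = c² + 2`, also
`ã₀ = c ã₁ − c² + 2`; as `c ≠ 0`, this affine relation matches `ã₁` with `ã₀` and nothing else.
-/

noncomputable section

/-- The substitution ring homomorphism `t ↦ 1`, from `ℂ[t^{±1}, M^{±1}]` onto `ℂ[M^{±1}]`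
(the latter realized as the Laurent polynomial ring `LaurentPolynomial ℂ`). -/
def ev1 : R2 →+* LaurentPolynomial ℂ :=
  AddMonoidAlgebra.mapDomainRingHom ℂ (AddMonoidHom.snd ℤ ℤ)

/-- `ã₁(M) = −2M⁴ − 2M⁻⁴ + 2M² + 2M⁻² + 4` in `ℂ[M^{±1}]`. -/
def ta1 : LaurentPolynomial ℂ :=
  -2 * LaurentPolynomial.T 4 - 2 * LaurentPolynomial.T (-4)
    + 2 * LaurentPolynomial.T 2 + 2 * LaurentPolynomial.T (-2) + 4

/-- `ã₀(M) = M⁸ + M⁻⁸ − 2M⁶ − 2M⁻⁶ − 3M⁴ − 3M⁻⁴ + 2M² + 2M⁻² + 10` in `ℂ[M^{±1}]`. -/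
def ta0 : LaurentPolynomial ℂ :=
  LaurentPolynomial.T 8 + LaurentPolynomial.T (-8)
    - 2 * LaurentPolynomial.T 6 - 2 * LaurentPolynomial.T (-6)
    - 3 * LaurentPolynomial.T 4 - 3 * LaurentPolynomial.T (-4)
    + 2 * LaurentPolynomial.T 2 + 2 * LaurentPolynomial.T (-2) + 10

open LaurentPolynomial

lemma mapDomainRingHom_domCongr {S R G H : Type*} [CommSemiring S] [Semiring R] [Algebra S R]
    [AddMonoid G] [AddMonoid H] {f : G →+ H} {e : G ≃+ G} (hfe : ∀ g, f (e g) = f g)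
    (p : AddMonoidAlgebra R G) :
    AddMonoidAlgebra.mapDomainRingHom R f (AddMonoidAlgebra.domCongr S R e p) =
      AddMonoidAlgebra.mapDomainRingHom R f p := by
  have hf : f.comp (e : G →+ G) = f := AddMonoidHom.ext hfe
  conv_rhs => rw [← hf, AddMonoidAlgebra.mapDomainRingHom_comp]
  rfl

lemma T_injective {R : Type*} [Semiring R] [Nontrivial R] :
    Function.Injective (T : ℤ → R[T;T⁻¹]) :=
  AddMonoidAlgebra.single_left_injective one_ne_zero

lemma ev1_mon (a b : ℤ) : ev1 (mon a b) = T b :=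
  AddMonoidAlgebra.mapDomain_single

lemma ev1_sU (p : R2) : ev1 (sU p) = ev1 p :=
  mapDomainRingHom_domCongr (fun _ => rfl) p

lemma ev1_sD (p : R2) : ev1 (sD p) = ev1 p :=
  mapDomainRingHom_domCongr (fun _ => rfl) p

/-- The Laurent polynomial `x = M² − M⁻²`, the common value of `a₁`, `a₋₁` and the first factor
of `a₀` at `t = 1`. -/
def commonFactor : ℂ[T;T⁻¹] := T 2 - T (-2)

/-- The Laurent polynomial `c = −M⁴ − M⁻⁴ + M² + M⁻² + 2`, the value at `t = 1` of the second
factor of `a₀`. -/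
def a0Cofactor : ℂ[T;T⁻¹] := -T 4 - T (-4) + T 2 + T (-2) + 2

lemma commonFactor_ne_zero : commonFactor ≠ 0 :=
  sub_ne_zero.2 (T_injective.ne (by decide))

lemma a0Cofactor_ne_zero : a0Cofactor ≠ 0 := by
  have eval_one : eval₂ (RingHom.id ℂ) 1 a0Cofactor = 2 := by
    have eval_two : eval₂ (RingHom.id ℂ) 1 2 = 2 := map_ofNat _ 2
    simp only [a0Cofactor, map_add, map_sub, map_neg, eval₂_T, one_zpow, Units.val_one, eval_two]
    norm_num
  intro h
  simp [h] at eval_one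

lemma ev1_a1 : ev1 a1 = commonFactor := by
  simp only [a1, map_sub, ev1_mon, commonFactor]

lemma ev1_am1 : ev1 am1 = commonFactor := by
  simp only [am1, map_sub, ev1_mon, commonFactor]

lemma ev1_a0 : ev1 a0 = commonFactor * a0Cofactor := by
  simp only [a0, map_mul, map_add, map_sub, map_neg, ev1_mon, commonFactor, a0Cofactor, T_zero]
  ring

lemma ev1_A1 : ev1 A1 = -commonFactor ^ 3 := by
  simp only [A1, map_neg, map_mul, ev1_sU, ev1_sD, ev1_a1, ev1_am1]
  ring

lemma ev1_B1 : ev1 B1 = commonFactor ^ 3 * a0Cofactor := by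
  simp only [B1, map_mul, ev1_sU, ev1_sD, ev1_a0, ev1_a1, ev1_am1]
  ring

lemma ev1_C1 : ev1 C1 = commonFactor ^ 3 * (a0Cofactor ^ 2 - 2) := by
  simp only [C1, map_add, map_sub, map_neg, map_mul, ev1_sU, ev1_sD, ev1_a0, ev1_a1, ev1_am1]
  ring

lemma ev1_eq_of_A1_mul_add_B1_mul_eq_C1 {p0 p1 : R2} (h : A1 * p0 + B1 * p1 = C1) :
    ev1 p0 = a0Cofactor * ev1 p1 - a0Cofactor ^ 2 + 2 := by
  have specialized : -commonFactor ^ 3 * ev1 p0 + commonFactor ^ 3 * a0Cofactor * ev1 p1 =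
      commonFactor ^ 3 * (a0Cofactor ^ 2 - 2) := by
    simpa only [map_add, map_mul, ev1_A1, ev1_B1, ev1_C1] using congrArg ev1 h
  apply mul_left_cancel₀ (pow_ne_zero 3 commonFactor_ne_zero)
  linear_combination -specialized

lemma ta1_eq_two_mul_a0Cofactor : ta1 = 2 * a0Cofactor := by
  simp only [ta1, a0Cofactor]
  ring

lemma ta0_eq_a0Cofactor_sq_add_two : ta0 = a0Cofactor ^ 2 + 2 := by
  -- The identity is polynomial in `M²` and `M⁻²`, modulo `M² · M⁻² = 1`.
  have mul_inv : (T 2 : ℂ[T;T⁻¹]) * T (-2) = 1 := (T_add 2 (-2)).symm.trans T_zero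
  have ta0_eq : ta0 = T 2 ^ 4 + T (-2) ^ 4 - 2 * T 2 ^ 3 - 2 * T (-2) ^ 3 - 3 * T 2 ^ 2 -
      3 * T (-2) ^ 2 + 2 * T 2 + 2 * T (-2) + 10 := by
    norm_num only [ta0, T_pow]
  have cofactor_eq : a0Cofactor = -T 2 ^ 2 - T (-2) ^ 2 + T 2 + T (-2) + 2 := by
    norm_num only [a0Cofactor, T_pow]
  rw [ta0_eq, cofactor_eq]
  linear_combination (2 * T 2 + 2 * T (-2) - 2 * T 2 * T (-2) - 4) * mul_inv

lemma ta0_eq_a0Cofactor_mul_ta1 : ta0 = a0Cofactor * ta1 - a0Cofactor ^ 2 + 2 := by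
  rw [ta0_eq_a0Cofactor_sq_add_two, ta1_eq_two_mul_a0Cofactor]
  ring

/-- If `p₀, p₁ ∈ ℂ[t^{±1}, M^{±1}]` satisfy `A₁p₀ + B₁p₁ = C₁`, then `p₁(1,M) = ã₁(M)`
if and only if `p₀(1,M) = ã₀(M)`. -/
theorem initial_conditions_equivalent (p0 p1 : R2) (h : A1 * p0 + B1 * p1 = C1) :
    ev1 p1 = ta1 ↔ ev1 p0 = ta0 := by
  rw [ev1_eq_of_A1_mul_add_B1_mul_eq_C1 h, ta0_eq_a0Cofactor_mul_ta1, add_left_inj, sub_left_inj,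
    mul_right_inj' a0Cofactor_ne_zero]
end
end
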